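/- Let I ⊆ {1,…,s} and Σ a nonempty finite set of zero-nonzero conditions on I. Then Ada(Σ) = Ada(Comp(Σ)), where Comp(Σ) is the set of restrictions of elements of Σ to the compressed set of indices comp(Σ). -/

import Mathlib

/-!
Call `C ⊆ I` triangularly determining for `Σ` if on `Σ` each coordinate in `I` is a function of the
coordinates in `C` that do not exceed it. The compressed set of indices has this property: the index
`max I` is left out only when restriction to `I \ {max I}` is injective on `Σ`, and then that
coordinate is a function of the smaller ones.

Restricting to a triangularly determining set `C` does not change the adapted family. If
`max I ∉ C`, then `Ξ'` is empty and the recursion for `Ada` just drops `max I`. If `max I ∈ C`, then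
restriction to `C \ {max I}` is injective on `Ξ`, so it carries the set `Ξ'` of `Σ` to that of the
restriction of `Σ` to `C`, and induction applies to both `Ξ` and `Ξ'`. The induction is over all
triangularly determining sets because the compressed set of `Ξ'` may be smaller than that of `Ξ`.
-/

open Classical in
/-- Restriction (extension by zero) of a zero-nonzero condition to the index set `I`. -/
noncomputable def zres (I : Finset ℕ) (σ : ℕ → Fin 2) : ℕ → Fin 2 :=
  fun j => if j ∈ I then σ j else 0

open Classical in
/-- The adapted family `Ada(Σ)` of a finite set `Σ` of zero-nonzero conditions on `I`
(encoded as maps `ℕ → Fin 2` vanishing outside `I`), defined by recursion on `card I`: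
if `I = ∅` then `Ada(∅) = ∅` and `Ada({σ_∅}) = {∅}`; otherwise, with `i = max I`,
`I' = I \ {i}`, `Ξ` the set of restrictions of elements of `Σ` to `I'`, and `Ξ'` the set
of elements of `Ξ` having two different extensions in `Σ`,
`Ada(Σ) = Ada(Ξ) ∪ {J ∪ {i} : J ∈ Ada(Ξ')}`. -/
noncomputable def Ada (I : Finset ℕ) (S : Finset (ℕ → Fin 2)) : Finset (Finset ℕ) :=
  if hI : I.Nonempty then
    let i := I.max' hI
    let I' := I.erase i
    let Xi : Finset (ℕ → Fin 2) := S.image (zres I')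
    let Xi' : Finset (ℕ → Fin 2) :=
      Xi.filter (fun ξ => 1 < (S.filter (fun σ => zres I' σ = ξ)).card)
    Ada I' Xi ∪ (Ada I' Xi').image (insert i)
  else if S = ∅ then ∅ else {∅}
termination_by I.card
decreasing_by
  all_goals exact Finset.card_erase_lt_of_mem (I.max'_mem hI)

open Classical in
/-- The compressed set of indices `comp(Σ)` of a finite set `Σ` of zero-nonzero
conditions on `I`, defined by recursion on `card I`: `comp(Σ) = ∅` if `I = ∅`;
otherwise, with `i = max I`, `I' = I \ {i}` and `Ξ` the set of restrictions of the
elements of `Σ` to `I'`, `comp(Σ) = comp(Ξ)` if `card Σ = card Ξ`, and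
`comp(Σ) = comp(Ξ) ∪ {i}` if `card Σ > card Ξ`. -/
noncomputable def zcomp (I : Finset ℕ) (S : Finset (ℕ → Fin 2)) : Finset ℕ :=
  if hI : I.Nonempty then
    let i := I.max' hI
    let I' := I.erase i
    let Xi : Finset (ℕ → Fin 2) := S.image (zres I')
    if S.card = Xi.card then zcomp I' Xi else insert i (zcomp I' Xi)
  else ∅
termination_by I.card
decreasing_by
  all_goals exact Finset.card_erase_lt_of_mem (I.max'_mem hI)

section MaxInsert

variable {α : Type*} [LinearOrder α] {s : Finset α} {a : α}

theorem max'_insert_of_forall_lt (ha : ∀ x ∈ s, x < a) :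
    (insert a s).max' (Finset.insert_nonempty a s) = a :=
  (Finset.max'_eq_iff _ _ _).2 ⟨Finset.mem_insert_self a s,
    (Finset.forall_mem_insert _ _ _).2 ⟨le_rfl, fun x hx => (ha x hx).le⟩⟩

theorem erase_insert_of_forall_lt (ha : ∀ x ∈ s, x < a) : (insert a s).erase a = s :=
  Finset.erase_insert fun h => (ha a h).false

end MaxInsert

section Restriction

variable {C I : Finset ℕ} {σ τ : ℕ → Fin 2}

theorem zres_apply_of_mem {j : ℕ} (hj : j ∈ I) (σ : ℕ → Fin 2) : zres I σ j = σ j :=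
  if_pos hj

theorem zres_eq_zres_iff : zres I σ = zres I τ ↔ ∀ j ∈ I, σ j = τ j := by
  refine ⟨fun h j hj => ?_, fun h => funext fun j => ite_congr rfl (h j) fun _ => rfl⟩
  rw [← zres_apply_of_mem hj σ, h, zres_apply_of_mem hj τ]

theorem zres_zres_of_subset (hCI : C ⊆ I) (σ : ℕ → Fin 2) : zres C (zres I σ) = zres C σ :=
  zres_eq_zres_iff.2 fun _ hj => zres_apply_of_mem (hCI hj) σ

theorem zres_eq_self (h : ∀ j ∉ I, σ j = 0) : zres I σ = σ :=
  funext fun j => ite_eq_left_iff.2 fun hj => (h j hj).symm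

theorem injOn_zres_of_subset {S : Set (ℕ → Fin 2)} (hCI : C ⊆ I) (hC : S.InjOn (zres C)) :
    S.InjOn (zres I) := fun _ hσ _ hτ h =>
  hC hσ hτ (zres_eq_zres_iff.2 fun j hj => zres_eq_zres_iff.1 h j (hCI hj))

open Classical in
theorem image_zres_image_zres (hCI : C ⊆ I) (S : Finset (ℕ → Fin 2)) :
    (S.image (zres I)).image (zres C) = S.image (zres C) := by
  rw [Finset.image_image]
  exact Finset.image_congr fun σ _ => zres_zres_of_subset hCI σ

open Classical in
theorem injOn_zres_image_zres (S : Finset (ℕ → Fin 2)) :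
    Set.InjOn (zres I) (S.image (zres I) : Finset (ℕ → Fin 2)) := by
  simp only [Set.InjOn, Finset.mem_coe, Finset.forall_mem_image, zres_zres_of_subset subset_rfl]
  exact fun _ _ _ _ h => h

end Restriction

section DoublyExtended

variable {C D I : Finset ℕ} {S : Finset (ℕ → Fin 2)} {ξ : ℕ → Fin 2}

open Classical in
/-- The set `Ξ'` in the recursion for `Ada`: the restrictions to `I` of elements of `S` that have
two different extensions in `S`. -/
noncomputable def doublyExtended (I : Finset ℕ) (S : Finset (ℕ → Fin 2)) : Finset (ℕ → Fin 2) :=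
  (S.image (zres I)).filter fun ξ => 1 < (S.filter fun σ => zres I σ = ξ).card

open Classical in
theorem doublyExtended_subset : doublyExtended I S ⊆ S.image (zres I) :=
  Finset.filter_subset _ _

theorem mem_doublyExtended :
    ξ ∈ doublyExtended I S ↔ ∃ σ ∈ S, ∃ τ ∈ S, zres I σ = ξ ∧ zres I τ = ξ ∧ σ ≠ τ := by
  simp only [doublyExtended, Finset.mem_filter, Finset.mem_image, Finset.one_lt_card]
  grind

theorem doublyExtended_eq_empty (h : Set.InjOn (zres I) S) : doublyExtended I S = ∅ := by
  refine Finset.eq_empty_of_forall_notMem fun ξ hξ => ?_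
  obtain ⟨σ, hσ, τ, hτ, hσξ, hτξ, hne⟩ := mem_doublyExtended.1 hξ
  exact hne (h hσ hτ (hσξ.trans hτξ.symm))

open Classical in
theorem doublyExtended_image_zres (hCI : C ⊆ I) (hCD : C ⊆ D) (hD : Set.InjOn (zres D) S)
    (hC : Set.InjOn (zres C) (S.image (zres I) : Finset (ℕ → Fin 2))) :
    doublyExtended C (S.image (zres D)) = (doublyExtended I S).image (zres C) := by
  ext η
  rw [mem_doublyExtended, Finset.mem_image]
  constructor
  · rintro ⟨_, hσD, _, hτD, hση, hτη, hne⟩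
    obtain ⟨σ, hσ, rfl⟩ := Finset.mem_image.1 hσD
    obtain ⟨τ, hτ, rfl⟩ := Finset.mem_image.1 hτD
    rw [zres_zres_of_subset hCD] at hση hτη
    have hI : zres I σ = zres I τ := by
      refine hC (Finset.mem_image_of_mem _ hσ) (Finset.mem_image_of_mem _ hτ) ?_
      rw [zres_zres_of_subset hCI, zres_zres_of_subset hCI, hση, hτη]
    exact ⟨zres I σ, mem_doublyExtended.2 ⟨σ, hσ, τ, hτ, rfl, hI.symm, ne_of_apply_ne _ hne⟩,
      (zres_zres_of_subset hCI σ).trans hση⟩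
  · rintro ⟨ξ, hξ, rfl⟩
    obtain ⟨σ, hσ, τ, hτ, rfl, hτσ, hne⟩ := mem_doublyExtended.1 hξ
    refine ⟨zres D σ, Finset.mem_image_of_mem _ hσ, zres D τ, Finset.mem_image_of_mem _ hτ, ?_, ?_,
      fun h => hne (hD hσ hτ h)⟩
    · rw [zres_zres_of_subset hCD, zres_zres_of_subset hCI]
    · rw [zres_zres_of_subset hCD, ← hτσ, zres_zres_of_subset hCI]

end DoublyExtended

section Recursion

variable {I : Finset ℕ} {i : ℕ}

open Classical in
theorem Ada_empty_left (S : Finset (ℕ → Fin 2)) : Ada ∅ S = if S = ∅ then ∅ else {∅} := by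
  rw [Ada, dif_neg Finset.not_nonempty_empty]

open Classical in
theorem Ada_insert (hi : ∀ j ∈ I, j < i) (S : Finset (ℕ → Fin 2)) :
    Ada (insert i I) S =
      Ada I (S.image (zres I)) ∪ (Ada I (doublyExtended I S)).image (insert i) := by
  rw [Ada, dif_pos (Finset.insert_nonempty i I)]
  simp only [max'_insert_of_forall_lt hi, erase_insert_of_forall_lt hi]
  rfl

theorem Ada_empty_right (I : Finset ℕ) : Ada I ∅ = ∅ := by
  induction I using Finset.induction_on_max with
  | empty => simp [Ada_empty_left]
  | insert i I hi ih => simp [Ada_insert hi, doublyExtended, ih]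

theorem zcomp_empty_left (S : Finset (ℕ → Fin 2)) : zcomp ∅ S = ∅ := by
  rw [zcomp, dif_neg Finset.not_nonempty_empty]

open Classical in
theorem zcomp_insert (hi : ∀ j ∈ I, j < i) (S : Finset (ℕ → Fin 2)) :
    zcomp (insert i I) S =
      if Set.InjOn (zres I) S then zcomp I (S.image (zres I))
      else insert i (zcomp I (S.image (zres I))) := by
  rw [zcomp, dif_pos (Finset.insert_nonempty i I)]
  simp only [max'_insert_of_forall_lt hi, erase_insert_of_forall_lt hi, ← Finset.card_image_iff,
    eq_comm]

theorem zcomp_subset (I : Finset ℕ) (S : Finset (ℕ → Fin 2)) : zcomp I S ⊆ I := by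
  induction I using Finset.induction_on_max generalizing S with
  | empty => rw [zcomp_empty_left]
  | insert i I hi ih =>
    rw [zcomp_insert hi]
    split_ifs
    · exact (ih _).trans (Finset.subset_insert i I)
    · exact Finset.insert_subset_insert i (ih _)

end Recursion

/-- On `S`, each coordinate in `I` is a function of the coordinates in `C` that do not exceed it.
This is the property of `C = comp(S)` behind the invariance of `Ada`; with `C` and `I` fixed it
passes to subsets of `S`. -/
def TriangularlyDetermines (C I : Finset ℕ) (S : Finset (ℕ → Fin 2)) : Prop :=
  ∀ i ∈ I, ∀ σ ∈ S, ∀ τ ∈ S, (∀ k ∈ C, k ≤ i → σ k = τ k) → σ i = τ i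

namespace TriangularlyDetermines

variable {C C' I I' : Finset ℕ} {S S' : Finset (ℕ → Fin 2)} {i : ℕ}

theorem mono_left (h : TriangularlyDetermines C I S) (hC : C ⊆ C') :
    TriangularlyDetermines C' I S := fun i hi σ hσ τ hτ heq =>
  h i hi σ hσ τ hτ fun k hk => heq k (hC hk)

theorem anti_middle (h : TriangularlyDetermines C I S) (hI : I' ⊆ I) :
    TriangularlyDetermines C I' S := fun i hi => h i (hI hi)

theorem anti_right (h : TriangularlyDetermines C I S) (hS : S' ⊆ S) :
    TriangularlyDetermines C I S' := fun i hi σ hσ τ hτ => h i hi σ (hS hσ) τ (hS hτ)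

theorem of_insert_left (h : TriangularlyDetermines (insert i C) I S) (hi : ∀ j ∈ I, j < i) :
    TriangularlyDetermines C I S := by
  intro j hj σ hσ τ hτ heq
  refine h j hj σ hσ τ hτ ((Finset.forall_mem_insert _ _ _).2 ⟨fun hij => ?_, heq⟩)
  exact absurd hij (hi j hj).not_ge

theorem insert_middle (h : TriangularlyDetermines C I S)
    (hi : ∀ σ ∈ S, ∀ τ ∈ S, (∀ k ∈ C, k ≤ i → σ k = τ k) → σ i = τ i) :
    TriangularlyDetermines C (insert i I) S :=
  (Finset.forall_mem_insert _ _ _).2 ⟨hi, h⟩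

open Classical in
theorem image_zres_iff (hCI : C ⊆ I) :
    TriangularlyDetermines C I (S.image (zres I)) ↔ TriangularlyDetermines C I S := by
  simp only [TriangularlyDetermines, Finset.forall_mem_image]
  refine forall₂_congr fun i hi => forall₄_congr fun σ _ τ _ => ?_
  rw [zres_apply_of_mem hi, zres_apply_of_mem hi]
  refine imp_congr_left (forall₂_congr fun k hk => ?_)
  rw [zres_apply_of_mem (hCI hk), zres_apply_of_mem (hCI hk)]

theorem zres_eq_zres (h : TriangularlyDetermines C I S) {σ τ : ℕ → Fin 2} (hσ : σ ∈ S)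
    (hτ : τ ∈ S) (heq : zres C σ = zres C τ) : zres I σ = zres I τ :=
  zres_eq_zres_iff.2 fun i hi => h i hi σ hσ τ hτ fun k hk _ => zres_eq_zres_iff.1 heq k hk

theorem injOn_zres (h : TriangularlyDetermines C I S) (hI : Set.InjOn (zres I) S) :
    Set.InjOn (zres C) S :=
  fun _ hσ _ hτ heq => hI hσ hτ (h.zres_eq_zres hσ hτ heq)

end TriangularlyDetermines

theorem triangularlyDetermines_zcomp (I : Finset ℕ) (S : Finset (ℕ → Fin 2)) :
    TriangularlyDetermines (zcomp I S) I S := by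
  classical
  induction I using Finset.induction_on_max generalizing S with
  | empty => simp [TriangularlyDetermines]
  | insert i I hi ih =>
    have hsub : zcomp I (S.image (zres I)) ⊆ I := zcomp_subset _ _
    have hdet : TriangularlyDetermines (zcomp I (S.image (zres I))) I S :=
      (TriangularlyDetermines.image_zres_iff hsub).1 (ih _)
    rw [zcomp_insert hi]
    split_ifs with hinj
    · refine hdet.insert_middle fun σ hσ τ hτ heq => congrFun (hdet.injOn_zres hinj hσ hτ ?_) i
      exact zres_eq_zres_iff.2 fun k hk => heq k hk (hi k (hsub hk)).le
    · exact (hdet.mono_left (Finset.subset_insert _ _)).insert_middle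
        fun σ _ τ _ heq => heq i (Finset.mem_insert_self _ _) le_rfl

open Classical in
theorem Ada_image_zres_of_triangularlyDetermines {C I : Finset ℕ} {S : Finset (ℕ → Fin 2)}
    (hCI : C ⊆ I) (hdet : TriangularlyDetermines C I S) (hinj : Set.InjOn (zres I) S) :
    Ada C (S.image (zres C)) = Ada I S := by
  induction I using Finset.induction_on_max generalizing C S with
  | empty => simp [Finset.subset_empty.1 hCI, Ada_empty_left]
  | insert i I hi ih =>
    have hinjC : Set.InjOn (zres C) S := hdet.injOn_zres hinj
    have hdetI : TriangularlyDetermines C I S := hdet.anti_middle (Finset.subset_insert i I)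
    by_cases hiC : i ∈ C
    · obtain ⟨C, hiC', rfl⟩ : ∃ C', i ∉ C' ∧ insert i C' = C :=
        ⟨C.erase i, Finset.notMem_erase i C, Finset.insert_erase hiC⟩
      have hsub : C ⊆ I := (Finset.insert_subset_insert_iff hiC').1 hCI
      have hdetXi : TriangularlyDetermines C I (S.image (zres I)) :=
        (TriangularlyDetermines.image_zres_iff hsub).2 (hdetI.of_insert_left hi)
      have hinjXi := injOn_zres_image_zres (I := I) S
      have hXi := ih hsub hdetXi hinjXi
      have hXi' := ih hsub (hdetXi.anti_right doublyExtended_subset)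
        (hinjXi.mono (Finset.coe_subset.2 doublyExtended_subset))
      have hCsub : C ⊆ insert i C := Finset.subset_insert i C
      rw [Ada_insert hi, Ada_insert fun j hj => hi j (hsub hj), image_zres_image_zres hCsub,
        doublyExtended_image_zres hsub hCsub hinjC (hdetXi.injOn_zres hinjXi), hXi',
        ← hXi, image_zres_image_zres hsub]
    · have hsub : C ⊆ I := (Finset.subset_insert_iff_of_notMem hiC).1 hCI
      have hempty : doublyExtended I S = ∅ :=
        doublyExtended_eq_empty (injOn_zres_of_subset hsub hinjC)
      have hXi := ih hsub ((TriangularlyDetermines.image_zres_iff hsub).2 hdetI)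
        (injOn_zres_image_zres S)
      rw [Ada_insert hi, hempty, Ada_empty_right, Finset.image_empty, Finset.union_empty, ← hXi,
        image_zres_image_zres hsub]

open Classical in
/-- Let `I ⊆ {1,…,s}` and `Σ` a nonempty finite set of zero-nonzero
conditions on `I`. Then `Ada(Σ) = Ada(Comp(Σ))`, where `Comp(Σ)` is the set of
restrictions of the elements of `Σ` to the compressed set of indices `comp(Σ)`. -/
theorem Ada_eq_Ada_comp (s : ℕ) (I : Finset ℕ) (hI : I ⊆ Finset.Icc 1 s)
    (S : Finset (ℕ → Fin 2)) (hsupp : ∀ σ ∈ S, ∀ j ∉ I, σ j = 0)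
    (hS : S.Nonempty) :
    Ada I S = Ada (zcomp I S) (S.image (zres (zcomp I S))) := by
  have hinj : Set.InjOn (zres I) S := fun σ hσ τ hτ h => by
    rwa [zres_eq_self (hsupp σ hσ), zres_eq_self (hsupp τ hτ)] at h
  exact (Ada_image_zres_of_triangularlyDetermines (zcomp_subset I S)
    (triangularlyDetermines_zcomp I S) hinj).symm
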